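/- arXiv:2601.01137 — 2 statements merged into one kernel-verified Lean document; each statement's English description precedes it below -/
import Mathlib

section
/- Let N ≥ 1, let a, b be polynomials over F₂ = ZMod 2 of degree < N with coefficient vectors va, vb ∈ (ZMod 2)^N, let A = circulant va, B = circulant vb, H_X = [A B], H_Z = [Bᵀ Aᵀ], and let g = gcd(gcd(a,b), X^N − 1) in (ZMod 2)[X]. Then rank H_X = rank H_Z = N − deg g; consequently, setting k := 2N − rank H_X − rank H_Z (the number of logical qubits) and r_X := N − rank H_X, r_Z := N − rank H_Z (the numbers of independent redundant X- and Z-stabilizers), one has k = 2·deg g and r_X = r_Z = deg g = k/2. -/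
open Matrix Polynomial

/-- The polynomial `∑ i, vᵢ Xⁱ` associated with a coefficient vector `v ∈ (ZMod 2)^N`. -/
noncomputable def polyOfVec {N : ℕ} (v : Fin N → ZMod 2) : Polynomial (ZMod 2) :=
  ∑ i : Fin N, Polynomial.C (v i) * Polynomial.X ^ (i : ℕ)

/-!
Identify `F ^ N` with `F[X] / (X ^ N - 1)`. A circulant matrix then acts as multiplication by the
class of its polynomial, so the column space of `[A B]` is the ideal generated by `a` and `b`, which
is the principal ideal of `gcd a b`. Its quotient is `F[X] / (g)`, of dimension `deg g`. Negating
all row and column indices turns `A` and `B` into their transposes, so `[Bᵀ Aᵀ]` has the same rank.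
-/

section Matrix

variable {m n n₁ n₂ R : Type*} [CommSemiring R]

theorem range_mulVecLin_fromCols [Fintype n₁] [Fintype n₂] (A : Matrix m n₁ R)
    (B : Matrix m n₂ R) :
    LinearMap.range (fromCols A B).mulVecLin =
      LinearMap.range A.mulVecLin ⊔ LinearMap.range B.mulVecLin := by
  ext u
  simp only [LinearMap.mem_range, Submodule.mem_sup, mulVecLin_apply, exists_exists_eq_and,
    fromCols_mulVec]
  exact ⟨fun ⟨w, hw⟩ => ⟨_, _, hw⟩, fun ⟨w₁, w₂, hw⟩ => ⟨Sum.elim w₁ w₂, by simpa using hw⟩⟩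

theorem rank_fromCols_circulant_transpose [Fintype n] [AddCommGroup n] (v w : n → R) :
    (fromCols (circulant w)ᵀ (circulant v)ᵀ).rank =
      (fromCols (circulant v) (circulant w)).rank := by
  rw [← rank_submatrix (fromCols (circulant v) (circulant w)) (Equiv.neg n)
    ((Equiv.sumComm n n).trans (Equiv.sumCongr (Equiv.neg n) (Equiv.neg n)))]
  congr 1
  ext i (j | j) <;> simp [neg_add_eq_sub]

end Matrix

section AdjoinRoot

variable {F : Type*} [Field F] [GCDMonoid F[X]]

theorem finrank_adjoinRoot_quotient_span_mk (f p : F[X]) :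
    Module.finrank F (AdjoinRoot f ⧸ Ideal.span {AdjoinRoot.mk f p}) = (gcd p f).natDegree := by
  have hmap : (Ideal.span {p}).map (Ideal.Quotient.mkₐ F (Ideal.span {f})) =
      Ideal.span {AdjoinRoot.mk f p} := by
    rw [Ideal.map_span, Set.image_singleton]
    rfl
  have hsup : Ideal.span {f} ⊔ Ideal.span {p} = Ideal.span {gcd p f} := by
    rw [sup_comm, ← Ideal.span_insert, span_gcd]
  rw [← finrank_quotient_span_eq_natDegree, ← hsup, ← hmap]
  exact (DoubleQuot.quotQuotEquivQuotSupₐ F (Ideal.span {f})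
    (Ideal.span {p})).toLinearEquiv.finrank_eq

theorem finrank_span_mk_add_natDegree_gcd {f : F[X]} (hf : f ≠ 0) (p : F[X]) :
    Module.finrank F ((Ideal.span {AdjoinRoot.mk f p}).restrictScalars F) +
      (gcd p f).natDegree = f.natDegree := by
  have : Module.Finite F (AdjoinRoot f) := (AdjoinRoot.powerBasis hf).finite
  rw [← finrank_adjoinRoot_quotient_span_mk, add_comm, ← finrank_quotient_span_eq_natDegree]
  exact ((Ideal.span {AdjoinRoot.mk f p}).restrictScalars F).finrank_quotient_add_finrank

theorem span_mk_gcd (f p q : F[X]) :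
    Ideal.span {AdjoinRoot.mk f (gcd p q)} =
      Ideal.span {AdjoinRoot.mk f p} ⊔ Ideal.span {AdjoinRoot.mk f q} := by
  have h := congrArg (Ideal.map (AdjoinRoot.mk f)) (span_gcd p q)
  rwa [Ideal.map_span, Ideal.map_span, Set.image_singleton, Set.image_pair,
    Ideal.span_insert] at h

end AdjoinRoot

section Cyclic

variable {R : Type*} {N : ℕ}

theorem pow_val_add_of_pow_eq_one {M : Type*} [Monoid M] {x : M} (hx : x ^ N = 1) (i j : Fin N) :
    x ^ (i + j).val = x ^ i.val * x ^ j.val := by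
  rw [Fin.val_add, ← pow_eq_pow_mod _ hx, pow_add]

theorem sum_circulant_mulVec_smul_pow {A : Type*} [CommSemiring R] [Semiring A] [Algebra R A]
    [NeZero N] {x : A} (hx : x ^ N = 1) (v w : Fin N → R) :
    ∑ i, (circulant v *ᵥ w) i • x ^ i.val = (∑ i, v i • x ^ i.val) * ∑ j, w j • x ^ j.val := by
  calc ∑ i, (circulant v *ᵥ w) i • x ^ i.val
      = ∑ j, ∑ i, (v (i - j) * w j) • x ^ i.val := by
        simp only [mulVec, dotProduct, circulant_apply, Finset.sum_smul]
        exact Finset.sum_comm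
    _ = ∑ j, ∑ i, (v i * w j) • x ^ (i + j).val :=
        Finset.sum_congr rfl fun j _ =>
          Fintype.sum_equiv (Equiv.subRight j) _ _ fun i => by simp
    _ = (∑ i, v i • x ^ i.val) * ∑ j, w j • x ^ j.val := by
        rw [Finset.sum_mul_sum, Finset.sum_comm]
        simp only [pow_val_add_of_pow_eq_one hx, smul_mul_smul_comm]

variable [CommRing R]

theorem adjoinRoot_root_pow_eq_one : AdjoinRoot.root (X ^ N - 1 : R[X]) ^ N = 1 := by
  have hroot := AdjoinRoot.eval₂_root (X ^ N - 1 : R[X])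
  rwa [eval₂_sub, eval₂_X_pow, eval₂_one, sub_eq_zero] at hroot

theorem monic_X_pow_sub_one [NeZero N] : (X ^ N - 1 : R[X]).Monic := by
  simpa using monic_X_pow_sub_C (1 : R) (NeZero.ne N)

variable [Nontrivial R]

theorem natDegree_X_pow_sub_one : (X ^ N - 1 : R[X]).natDegree = N := by
  simpa using natDegree_X_pow_sub_C (R := R) (n := N) (r := 1)

variable [NeZero N]

/-- The identification of coefficient vectors of length `N` with elements of `R[X] / (X ^ N - 1)`,
taking `v` to `∑ i, v i • x ^ i` for `x` the class of `X`; it transports circulant matrices to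
multiplication operators. -/
noncomputable def cyclicEquiv : (Fin N → R) ≃ₗ[R] AdjoinRoot (X ^ N - 1 : R[X]) :=
  ((AdjoinRoot.powerBasis' monic_X_pow_sub_one).basis.reindex
    (finCongr natDegree_X_pow_sub_one)).equivFun.symm

theorem cyclicEquiv_apply (v : Fin N → R) :
    cyclicEquiv v = ∑ i, v i • AdjoinRoot.root (X ^ N - 1 : R[X]) ^ i.val := by
  rw [cyclicEquiv, Module.Basis.equivFun_symm_apply]
  simp only [Module.Basis.reindex_apply, PowerBasis.basis_eq_pow, AdjoinRoot.powerBasis'_gen]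
  rfl

theorem cyclicEquiv_eq_mk_ofFn [DecidableEq R] (v : Fin N → R) :
    cyclicEquiv v = AdjoinRoot.mk (X ^ N - 1) (ofFn N v) := by
  simp [cyclicEquiv_apply, ofFn_eq_sum_monomial, ← C_mul_X_pow_eq_monomial, Algebra.smul_def]

theorem cyclicEquiv_circulant_mulVec (v w : Fin N → R) :
    cyclicEquiv (circulant v *ᵥ w) = cyclicEquiv v * cyclicEquiv w := by
  simp only [cyclicEquiv_apply, sum_circulant_mulVec_smul_pow adjoinRoot_root_pow_eq_one]

theorem map_cyclicEquiv_range_circulant (v : Fin N → R) :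
    (LinearMap.range (circulant v).mulVecLin).map (cyclicEquiv : (Fin N → R) ≃ₗ[R] _).toLinearMap =
      (Ideal.span {cyclicEquiv v}).restrictScalars R := by
  ext y
  simp only [Submodule.mem_map, LinearMap.mem_range, exists_exists_eq_and, mulVecLin_apply,
    LinearEquiv.coe_coe, cyclicEquiv_circulant_mulVec, Submodule.restrictScalars_mem,
    Ideal.mem_span_singleton', mul_comm (cyclicEquiv v)]
  exact (cyclicEquiv.surjective.exists (p := fun z => z * cyclicEquiv v = y)).symm

theorem rank_fromCols_circulant (v w : Fin N → R) :
    (fromCols (circulant v) (circulant w)).rank =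
      Module.finrank R
        ((Ideal.span {cyclicEquiv v} ⊔ Ideal.span {cyclicEquiv w}).restrictScalars R) := by
  rw [Submodule.restrictScalars_sup, ← map_cyclicEquiv_range_circulant,
    ← map_cyclicEquiv_range_circulant, ← Submodule.map_sup, ← range_mulVecLin_fromCols,
    LinearEquiv.finrank_map_eq, Matrix.rank]

end Cyclic

theorem rank_fromCols_circulant_add_natDegree_gcd {F : Type*} [Field F] [DecidableEq F] {N : ℕ}
    [NeZero N] (v w : Fin N → F) :
    (fromCols (circulant v) (circulant w)).rank +
      (gcd (gcd (ofFn N v) (ofFn N w)) (X ^ N - 1)).natDegree = N := by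
  rw [rank_fromCols_circulant, cyclicEquiv_eq_mk_ofFn, cyclicEquiv_eq_mk_ofFn, ← span_mk_gcd,
    finrank_span_mk_add_natDegree_gcd monic_X_pow_sub_one.ne_zero, natDegree_X_pow_sub_one]

theorem bb_rank_and_redundancy_general {F : Type*} [Field F] [DecidableEq F] (N : ℕ) (hN : 1 ≤ N)
    (va vb : Fin N → F) (a b : F[X]) (ha : a = ofFn N va) (hb : b = ofFn N vb)
    (g : F[X]) (hg : g = gcd (gcd a b) (X ^ N - 1))
    (HX HZ : Matrix (Fin N) (Fin N ⊕ Fin N) F)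
    (hHX : HX = fromCols (circulant va) (circulant vb))
    (hHZ : HZ = fromCols (circulant vb)ᵀ (circulant va)ᵀ)
    (k rX rZ : ℕ) (hk : k = 2 * N - HX.rank - HZ.rank)
    (hrX : rX = N - HX.rank) (hrZ : rZ = N - HZ.rank) :
    HX.rank = N - g.natDegree ∧ HZ.rank = N - g.natDegree ∧
    k = 2 * g.natDegree ∧ rX = g.natDegree ∧ rZ = g.natDegree ∧ g.natDegree = k / 2 := by
  have : NeZero N := ⟨by lia⟩
  have rank_HX : HX.rank + g.natDegree = N := by
    rw [hHX, hg, ha, hb, rank_fromCols_circulant_add_natDegree_gcd]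
  have rank_HZ : HZ.rank = HX.rank := by
    rw [hHX, hHZ, rank_fromCols_circulant_transpose]
  lia

theorem polyOfVec_eq_ofFn {N : ℕ} (v : Fin N → ZMod 2) : polyOfVec v = ofFn N v := by
  simp only [polyOfVec, ofFn_eq_sum_monomial, C_mul_X_pow_eq_monomial]

/-- For a coprime BB code with `H_X = [A B]`, `H_Z = [Bᵀ Aᵀ]` and
`g = gcd(gcd(a,b), X^N - 1)`, one has `rank H_X = rank H_Z = N - deg g`; hence
`k = 2 deg g` and `r_X = r_Z = deg g = k/2`. -/
theorem bb_rank_and_redundancy (N : ℕ) (hN : 1 ≤ N) (va vb : Fin N → ZMod 2)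
    (a b : Polynomial (ZMod 2)) (ha : a = polyOfVec va) (hb : b = polyOfVec vb)
    (g : Polynomial (ZMod 2)) (hg : g = gcd (gcd a b) (Polynomial.X ^ N - 1))
    (HX HZ : Matrix (Fin N) (Fin N ⊕ Fin N) (ZMod 2))
    (hHX : HX = Matrix.fromCols (Matrix.circulant va) (Matrix.circulant vb))
    (hHZ : HZ = Matrix.fromCols (Matrix.circulant vb)ᵀ (Matrix.circulant va)ᵀ)
    (k rX rZ : ℕ)
    (hk : k = 2 * N - HX.rank - HZ.rank)
    (hrX : rX = N - HX.rank) (hrZ : rZ = N - HZ.rank) :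
    HX.rank = N - g.natDegree ∧ HZ.rank = N - g.natDegree ∧
    k = 2 * g.natDegree ∧ rX = g.natDegree ∧ rZ = g.natDegree ∧ g.natDegree = k / 2 := by
  exact bb_rank_and_redundancy_general N hN va vb a b (ha.trans (polyOfVec_eq_ofFn va))
    (hb.trans (polyOfVec_eq_ofFn vb)) g hg HX HZ hHX hHZ k rX rZ hk hrX hrZ
end

section
/- (BCH bound for the syndrome code of a coprime BB code.) Let N ≥ 1, let a, b be polynomials over F₂ = ZMod 2, and let g = gcd(gcd(a,b), X^N − 1). Let F be a field of characteristic 2 containing a primitive N-th root of unity α, and suppose there exist integers b₀ ≥ 0 and δ ≥ 2 with g(α^{b₀+i}) = 0 for all i = 0, …, δ−2 (evaluation via the canonical map ZMod 2 → F). Then every nonzero polynomial c over ZMod 2 with deg c < N whose image c̄ in (ZMod 2)[X]/(X^N − 1) lies in the ideal generated by ā and b̄ has Hamming weight at least δ; i.e. the syndrome code generated by g has minimum distance d_S ≥ δ. -/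
open Polynomial

/-! Since `g` divides `a`, `b` and `X ^ N - 1`, it divides `c`, so `c` inherits the `δ - 1`
consecutive roots of `g`. If `c ≠ 0` had at most `δ - 1` terms, its nonzero coefficients, rescaled
by powers of `α ^ b₀`, would lie in the kernel of a square Vandermonde matrix with nodes `α ^ k`,
`k ∈ c.support`, which are distinct because `c.natDegree < N`. -/

theorem dvd_of_mk_mem_span_image {R : Type*} [CommRing R] {I : Ideal R} {s : Set R} {c g : R}
    (hI : ∀ x ∈ I, g ∣ x) (hs : ∀ x ∈ s, g ∣ x)
    (hc : Ideal.Quotient.mk I c ∈ Ideal.span (Ideal.Quotient.mk I '' s)) : g ∣ c := by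
  rw [← Ideal.map_span, Ideal.mem_quotient_iff_mem_sup] at hc
  have hle : Ideal.span s ⊔ I ≤ Ideal.span {g} :=
    sup_le (Ideal.span_le.2 fun x hx => Ideal.mem_span_singleton.2 (hs x hx))
      fun x hx => Ideal.mem_span_singleton.2 (hI x hx)
  exact Ideal.mem_span_singleton.1 (hle hc)

section ConsecutiveRoots

variable {R : Type*} [CommRing R] [IsDomain R]

theorem eq_zero_of_forall_sum_mul_pow_eq_zero {ι : Type*} {s : Finset ι} {v f : ι → R}
    (hf : Set.InjOn f s) (hv : ∀ i < s.card, ∑ j ∈ s, v j * f j ^ i = 0) :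
    ∀ j ∈ s, v j = 0 := by
  let e := s.equivFin
  have hinj : Function.Injective fun k => f (e.symm k) :=
    hf.injective.comp e.symm.injective
  have hsum (i : Fin s.card) : ∑ k, v (e.symm k) * f (e.symm k) ^ (i : ℕ) = 0 := by
    rw [e.symm.sum_comp fun j : s => v j * f j ^ (i : ℕ),
      Finset.sum_coe_sort s fun j => v j * f j ^ (i : ℕ)]
    exact hv i i.isLt
  intro j hj
  simpa using congrFun (Matrix.eq_zero_of_forall_pow_sum_mul_pow_eq_zero hinj hsum) (e ⟨j, hj⟩)

theorem lt_card_support_of_forall_isRoot_mul_pow {c : R[X]} (hc : c ≠ 0) {α β : R} (hβ : β ≠ 0)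
    (hα : Set.InjOn (fun k : ℕ => α ^ k) c.support) {m : ℕ}
    (hroots : ∀ i < m, c.IsRoot (β * α ^ i)) : m < c.support.card := by
  by_contra! hcard
  have hsum : ∀ i < c.support.card,
      ∑ k ∈ c.support, c.coeff k * β ^ k * (α ^ k) ^ i = 0 := by
    intro i hi
    rw [← (hroots i (hi.trans_le hcard)).eq_zero, eval_eq_sum, sum_def]
    refine Finset.sum_congr rfl fun k _ => ?_
    ring
  have hlead := eq_zero_of_forall_sum_mul_pow_eq_zero hα hsum c.natDegree
    (natDegree_mem_support_of_nonzero hc)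
  exact mul_ne_zero (leadingCoeff_ne_zero.2 hc) (pow_ne_zero _ hβ) hlead

end ConsecutiveRoots

theorem injOn_pow_support_of_natDegree_lt {R M : Type*} [Semiring R] [CommMonoid M]
    {c : R[X]} {α : M} {N : ℕ} (hα : IsPrimitiveRoot α N) (hc : c.natDegree < N) :
    Set.InjOn (fun k : ℕ => α ^ k) c.support := fun _ hk _ hl hkl =>
  hα.pow_inj ((le_natDegree_of_mem_supp _ hk).trans_lt hc)
    ((le_natDegree_of_mem_supp _ hl).trans_lt hc) hkl

theorem bch_bound_of_dvd {R F : Type*} [CommSemiring R] [CommRing F] [IsDomain F] {φ : R →+* F}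
    (hφ : Function.Injective φ) {N : ℕ} {α : F} (hα : IsPrimitiveRoot α N) {b₀ δ : ℕ} {g : R[X]}
    (hroots : ∀ i < δ - 1, g.eval₂ φ (α ^ (b₀ + i)) = 0) {c : R[X]} (hc0 : c ≠ 0)
    (hcdeg : c.natDegree < N) (hgc : g ∣ c) : δ ≤ c.support.card := by
  have hα0 : α ≠ 0 := hα.ne_zero (Nat.ne_zero_of_lt hcdeg)
  have hmap_roots : ∀ i < δ - 1, (c.map φ).IsRoot (α ^ b₀ * α ^ i) := fun i hi => by
    rw [← pow_add, IsRoot, eval_map]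
    exact eval₂_eq_zero_of_dvd_of_eval₂_eq_zero φ _ hgc (hroots i hi)
  have hcard := lt_card_support_of_forall_isRoot_mul_pow ((Polynomial.map_ne_zero_iff hφ).2 hc0)
    (pow_ne_zero b₀ hα0)
    (injOn_pow_support_of_natDegree_lt hα (natDegree_map_le.trans_lt hcdeg)) hmap_roots
  rw [support_map_of_injective c hφ] at hcard
  lia

theorem bch_bound_syndrome_code_general {R F : Type*} [CommRing R] [CommRing F] [IsDomain F]
    {φ : R →+* F} (hφ : Function.Injective φ) {N : ℕ} {a b g : R[X]} (hga : g ∣ a) (hgb : g ∣ b)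
    (hgX : g ∣ X ^ N - 1) {α : F} (hα : IsPrimitiveRoot α N) {b₀ δ : ℕ}
    (hroots : ∀ i < δ - 1, g.eval₂ φ (α ^ (b₀ + i)) = 0) {c : R[X]} (hc0 : c ≠ 0)
    (hcdeg : c.natDegree < N)
    (hmem : Ideal.Quotient.mk (Ideal.span {X ^ N - 1}) c ∈
      Ideal.span {Ideal.Quotient.mk (Ideal.span {X ^ N - 1}) a,
        Ideal.Quotient.mk (Ideal.span {X ^ N - 1}) b}) :
    δ ≤ c.support.card := by
  rw [← Set.image_pair] at hmem
  have hgc : g ∣ c := dvd_of_mk_mem_span_image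
    (fun x hx => hgX.trans (Ideal.mem_span_singleton.1 hx)) (by simp [hga, hgb]) hmem
  exact bch_bound_of_dvd hφ hα hroots hc0 hcdeg hgc

/-- BCH bound for the syndrome code of a coprime BB code: Let
`g = gcd(gcd(a,b), X^N - 1)` and suppose `g` vanishes at `δ - 1` consecutive powers of a
primitive `N`-th root of unity `α` in a field `F` of characteristic 2. Then every
nonzero `c` of degree `< N` whose class mod `X^N - 1` lies in the ideal generated by the
classes of `a` and `b` has Hamming weight at least `δ`. -/
theorem bch_bound_syndrome_code (N : ℕ) (hN : 1 ≤ N) (a b : Polynomial (ZMod 2))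
    (g : Polynomial (ZMod 2)) (hg : g = gcd (gcd a b) (Polynomial.X ^ N - 1))
    (F : Type*) [Field F] [CharP F 2] (α : F) (hα : orderOf α = N)
    (b₀ δ : ℕ) (hδ : 2 ≤ δ)
    (hroots : ∀ i ≤ δ - 2,
      Polynomial.eval₂ (ZMod.castHom (dvd_refl 2) F) (α ^ (b₀ + i)) g = 0)
    (I : Ideal (Polynomial (ZMod 2)))
    (hI : I = Ideal.span {Polynomial.X ^ N - 1})
    (c : Polynomial (ZMod 2)) (hc0 : c ≠ 0) (hcdeg : c.natDegree < N)
    (hmem : Ideal.Quotient.mk I c ∈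
      Ideal.span {Ideal.Quotient.mk I a, Ideal.Quotient.mk I b}) :
    δ ≤ c.support.card := by
  subst hg hI
  exact bch_bound_syndrome_code_general (RingHom.injective _)
    ((gcd_dvd_left _ _).trans (gcd_dvd_left _ _)) ((gcd_dvd_left _ _).trans (gcd_dvd_right _ _))
    (gcd_dvd_right _ _) (hα ▸ IsPrimitiveRoot.orderOf α) (fun i hi => hroots i (by lia)) hc0 hcdeg
    hmem
end
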